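/- arXiv:0710.1969 — 4 statements merged into one kernel-verified Lean document; each statement's English description precedes it below -/
import Mathlib

section
/- Let ω be the 1-form on ℂ³ given by ω(w)(v) = v₃ − (1/2)w₁v₂ + (1/2)w₂v₁, and let η be the 1-form on ℂ³ given by η(z)(u) = u₁ + z₂u₃. Define φ : ℂ³ → ℂ³ by φ(w₁,w₂,w₃) = (w₃ − (1/2)w₁w₂, w₂, w₁). Then φ is bijective with inverse (z₁,z₂,z₃) ↦ (z₃, z₂, z₁ + (1/2)z₂z₃), and for every w ∈ ℂ³ and every v ∈ ℂ³ one has ω(w)(v) = 0 if and only if η(φ(w))((fderiv φ w)(v)) = 0. (This identifies the superhorizontal Pfaffian system of the twistor fibration F₃(ℂ) → ℂP² with the model system S²₃ = {dz₁ + z₂dz₃}.) -/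
/-!
For every parameter `a`, the product rule gives
`d(w₃ - a w₁w₂) + w₂ dw₁ = dw₃ - a w₁ dw₂ + (1 - a) w₂ dw₁`.
The left-hand side is the pullback of `dz₁ + z₂ dz₃` under `z = (w₃ - a w₁w₂, w₂, w₁)`, so this
coordinate change pulls the model form back to the given form on the nose, not merely up to a
nonvanishing factor. The twistor fibration is the symmetric case `a = 1/2`.
-/

section Forms

variable {R : Type*} [CommRing R] [TopologicalSpace R] [IsTopologicalRing R]

/-- The contact form `dw₃ - a w₁ dw₂ + (1 - a) w₂ dw₁` on `R³`. At `a = 1/2` it is the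
superhorizontal form of the twistor fibration `F₃(ℂ) → ℂP²`; at `a = 0` it is the model form with
the coordinates in reverse order. -/
def contactForm (a : R) (w : Fin 3 → R) : (Fin 3 → R) →L[R] R :=
  .proj 2 - (a * w 0) • .proj 1 + ((1 - a) * w 1) • .proj 0

@[simp]
lemma contactForm_apply (a : R) (w v : Fin 3 → R) :
    contactForm a w v = v 2 - a * w 0 * v 1 + (1 - a) * w 1 * v 0 :=
  rfl

/-- The form `dz₁ + z₂ dz₃` on `R³`, which generates the model system `S²₃`. -/
def modelContactForm (z : Fin 3 → R) : (Fin 3 → R) →L[R] R :=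
  .proj 0 + z 1 • .proj 2

@[simp]
lemma modelContactForm_apply (z u : Fin 3 → R) : modelContactForm z u = u 0 + z 1 * u 2 :=
  rfl

end Forms

/-- The polynomial change of coordinates `(w₁, w₂, w₃) ↦ (w₃ - a w₁w₂, w₂, w₁)`, which brings
`contactForm a` to the model form. -/
@[simps]
def straightening {R : Type*} [CommRing R] (a : R) : (Fin 3 → R) ≃ (Fin 3 → R) where
  toFun w := ![w 2 - a * w 0 * w 1, w 1, w 0]
  invFun z := ![z 2, z 1, z 0 + a * z 1 * z 2]
  left_inv w := by
    ext i
    fin_cases i <;> simp [mul_right_comm]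
  right_inv z := by
    ext i
    fin_cases i <;> simp [mul_right_comm]

section Pullback

variable {𝕜 : Type*} [NontriviallyNormedField 𝕜]

lemma hasFDerivAt_straightening (a : 𝕜) (w : Fin 3 → 𝕜) :
    HasFDerivAt (straightening a)
      (.pi (![.proj 2 - a • (w 0 • .proj 1 + w 1 • .proj 0), .proj 1, .proj 0] :
        Fin 3 → (Fin 3 → 𝕜) →L[𝕜] 𝕜)) w := by
  have hcoord (i : Fin 3) := hasFDerivAt_apply (𝕜 := 𝕜) i w
  refine hasFDerivAt_pi'.2 fun i ↦ ?_
  fin_cases i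
  · simpa [mul_assoc] using (hcoord 2).fun_sub (((hcoord 0).fun_mul (hcoord 1)).const_mul a)
  · exact hcoord 1
  · exact hcoord 0

lemma fderiv_straightening_apply (a : 𝕜) (w v : Fin 3 → 𝕜) :
    fderiv 𝕜 (straightening a) w v = ![v 2 - a * (w 0 * v 1 + w 1 * v 0), v 1, v 0] := by
  rw [(hasFDerivAt_straightening a w).fderiv]
  ext i
  fin_cases i <;> rfl

theorem modelContactForm_comp_fderiv_straightening (a : 𝕜) (w : Fin 3 → 𝕜) :
    modelContactForm (straightening a w) ∘L fderiv 𝕜 (straightening a) w = contactForm a w := by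
  refine ContinuousLinearMap.ext fun v ↦ ?_
  calc modelContactForm (straightening a w) (fderiv 𝕜 (straightening a) w v)
      = v 2 - a * (w 0 * v 1 + w 1 * v 0) + w 1 * v 0 := by
        simp [fderiv_straightening_apply]
    _ = contactForm a w v := by
        rw [contactForm_apply]
        ring

end Pullback

theorem stmt1_general {𝕜 : Type*} [NontriviallyNormedField 𝕜] (a : 𝕜)
    (ω η : (Fin 3 → 𝕜) → ((Fin 3 → 𝕜) →L[𝕜] 𝕜))
    (hω : ∀ w v, ω w v = v 2 - a * w 0 * v 1 + (1 - a) * w 1 * v 0)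
    (hη : ∀ z u, η z u = u 0 + z 1 * u 2)
    (φ ψ : (Fin 3 → 𝕜) → (Fin 3 → 𝕜))
    (hφ : ∀ w, φ w = ![w 2 - a * w 0 * w 1, w 1, w 0])
    (hψ : ∀ z, ψ z = ![z 2, z 1, z 0 + a * z 1 * z 2]) :
    Function.Bijective φ ∧ Function.LeftInverse ψ φ ∧ Function.RightInverse ψ φ ∧
    ∀ w, η (φ w) ∘L fderiv 𝕜 φ w = ω w := by
  obtain rfl : ω = contactForm a := funext fun w ↦ ContinuousLinearMap.ext (hω w)
  obtain rfl : η = modelContactForm := funext fun z ↦ ContinuousLinearMap.ext (hη z)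
  obtain rfl : φ = straightening a := funext hφ
  obtain rfl : ψ = (straightening a).symm := funext hψ
  exact ⟨(straightening a).bijective, (straightening a).left_inv, (straightening a).right_inv,
    modelContactForm_comp_fderiv_straightening a⟩

/-- The superhorizontal Pfaffian system of `F₃(ℂ) → ℂP²`, given by the
1-form `ω(w)(v) = v₃ - (1/2)w₁v₂ + (1/2)w₂v₁` on `ℂ³`, is identified with the model
system `S²₃ = {dz₁ + z₂ dz₃}` by `φ(w₁,w₂,w₃) = (w₃ - (1/2)w₁w₂, w₂, w₁)`. -/
theorem stmt1 (ω η : (Fin 3 → ℂ) → ((Fin 3 → ℂ) →L[ℂ] ℂ))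
    (hω : ∀ w v, ω w v = v 2 - (1/2) * w 0 * v 1 + (1/2) * w 1 * v 0)
    (hη : ∀ z u, η z u = u 0 + z 1 * u 2)
    (φ ψ : (Fin 3 → ℂ) → (Fin 3 → ℂ))
    (hφ : ∀ w, φ w = ![w 2 - (1/2) * w 0 * w 1, w 1, w 0])
    (hψ : ∀ z, ψ z = ![z 2, z 1, z 0 + (1/2) * z 1 * z 2]) :
    Function.Bijective φ ∧ Function.LeftInverse ψ φ ∧ Function.RightInverse ψ φ ∧
    ∀ w v : Fin 3 → ℂ, ω w v = 0 ↔ η (φ w) (fderiv ℂ φ w v) = 0 := by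
  obtain ⟨hbij, hleft, hright, hpull⟩ :=
    stmt1_general (1 / 2) ω η (fun w v ↦ by rw [hω]; ring) hη φ ψ hφ hψ
  exact ⟨hbij, hleft, hright, fun w v ↦ by rw [← hpull w, ContinuousLinearMap.comp_apply]⟩
end

section
/- On ℂ⁴ with coordinates (x, t₂, t₁, y), define the 1-forms ω₁(w)(v) = v_{t₁} − (1/2)x·v_{t₂} + (1/2)t₂·v_x and ω₂(w)(v) = v_y + t₁v_{t₂} − t₂v_{t₁} + (1/3)t₂x·v_{t₂} − (1/3)t₂²·v_x. Define ψ : ℂ⁴ → ℂ⁴ by ψ(x,t₂,t₁,y) = (y − t₁t₂ − (1/3)x t₂², 2t₁ + x t₂, t₂, −2x). Then ψ is bijective, and for every w ∈ ℂ⁴ and v ∈ ℂ⁴: (ω₁(w)(v) = 0 and ω₂(w)(v) = 0) if and only if, writing z = ψ(w) and u = (fderiv ψ w)(v), one has u₁ + z₂u₃ = 0 and u₂ + z₄u₃ = 0. (This identifies the superhorizontal Pfaffian system of the twistor fibration SO(5)/U(1)×SO(2) → SO(5)/SO(2)×SO(3) with the model system S⁷₄ = {dz₁ + z₂dz₃,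 dz₂ + z₄dz₃}.) -/
/-!
The map `ψ` is triangular, hence has a polynomial inverse, and it pulls the two model forms back to
multiples of the superhorizontal forms in the opposite order:
`ψ^*(dz₁ + z₂dz₃) = ω₂` and `ψ^*(dz₂ + z₄dz₃) = 2ω₁`.
-/

open ContinuousLinearMap (proj)

section Forms

variable {𝕜 : Type*} [NontriviallyNormedField 𝕜]

/-- The form `dt₁ - (1/2)x dt₂ + (1/2)t₂ dx` of the superhorizontal Pfaffian system, in the
coordinates `(x, t₂, t₁, y) = (w 0, w 1, w 2, w 3)`. -/
def superhorizontalForm₁ (w : Fin 4 → 𝕜) : (Fin 4 → 𝕜) →L[𝕜] 𝕜 :=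
  proj 2 - (1 / 2 * w 0) • proj 1 + (1 / 2 * w 1) • proj 0

/-- The form `dy + t₁dt₂ - t₂dt₁ + (1/3)t₂x dt₂ - (1/3)t₂² dx` of the superhorizontal Pfaffian
system, in the coordinates `(x, t₂, t₁, y) = (w 0, w 1, w 2, w 3)`. -/
def superhorizontalForm₂ (w : Fin 4 → 𝕜) : (Fin 4 → 𝕜) →L[𝕜] 𝕜 :=
  proj 3 + w 2 • proj 1 - w 1 • proj 2 + (1 / 3 * w 1 * w 0) • proj 1 - (1 / 3 * w 1 ^ 2) • proj 0

/-- The form `dz₁ + z₂dz₃` of the model system `S⁷₄`; the coordinate `zᵢ` is `z (i - 1)`. -/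
def modelForm₁ (z : Fin 4 → 𝕜) : (Fin 4 → 𝕜) →L[𝕜] 𝕜 :=
  proj 0 + z 1 • proj 2

/-- The form `dz₂ + z₄dz₃` of the model system `S⁷₄`; the coordinate `zᵢ` is `z (i - 1)`. -/
def modelForm₂ (z : Fin 4 → 𝕜) : (Fin 4 → 𝕜) →L[𝕜] 𝕜 :=
  proj 1 + z 3 • proj 2

end Forms

section ModelMap

variable {𝕜 : Type*} [Field 𝕜]

/-- The polynomial change of coordinates `ψ` from `(x, t₂, t₁, y)` to the coordinates
`(z₁, z₂, z₃, z₄)` of the model system `S⁷₄`. -/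
def modelMap (w : Fin 4 → 𝕜) : Fin 4 → 𝕜 :=
  ![w 3 - w 2 * w 1 - (1 / 3) * w 0 * w 1 ^ 2, 2 * w 2 + w 0 * w 1, w 1, -2 * w 0]

/-- The inverse of `modelMap`, obtained by solving successively for `t₂`, `x`, `t₁` and `y`. -/
def modelMapInv (z : Fin 4 → 𝕜) : Fin 4 → 𝕜 :=
  let x := -z 3 / 2
  let t₁ := (z 1 - x * z 2) / 2
  ![x, z 2, t₁, z 0 + t₁ * z 2 + (1 / 3) * x * z 2 ^ 2]

variable [NeZero (2 : 𝕜)]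

theorem leftInverse_modelMapInv :
    Function.LeftInverse (modelMapInv : (Fin 4 → 𝕜) → Fin 4 → 𝕜) modelMap := by
  intro w
  ext i
  fin_cases i <;>
    simp only [modelMapInv, modelMap, Fin.zero_eta, Fin.mk_one, Fin.reduceFinMk,
      Matrix.cons_val] <;>
    field_simp <;> ring

theorem rightInverse_modelMapInv :
    Function.RightInverse (modelMapInv : (Fin 4 → 𝕜) → Fin 4 → 𝕜) modelMap := by
  intro z
  ext i
  fin_cases i <;>
    simp only [modelMapInv, modelMap, Fin.zero_eta, Fin.mk_one, Fin.reduceFinMk,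
      Matrix.cons_val] <;>
    field_simp <;> ring

theorem modelMap_bijective : Function.Bijective (modelMap : (Fin 4 → 𝕜) → Fin 4 → 𝕜) :=
  Function.bijective_iff_has_inverse.2
    ⟨modelMapInv, leftInverse_modelMapInv, rightInverse_modelMapInv⟩

end ModelMap

section Pullback

variable {𝕜 : Type*} [NontriviallyNormedField 𝕜]

theorem hasFDerivAt_modelMap (w : Fin 4 → 𝕜) :
    HasFDerivAt modelMap
      (ContinuousLinearMap.pi ![
        proj 3 - (w 2 • proj 1 + w 1 • proj 2)
          - (1 / 3 : 𝕜) • (w 0 • (2 * w 1) • proj 1 + w 1 ^ 2 • proj 0),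
        (2 : 𝕜) • proj 2 + (w 0 • proj 1 + w 1 • proj 0),
        proj 1,
        (-2 : 𝕜) • proj 0] : (Fin 4 → 𝕜) →L[𝕜] (Fin 4 → 𝕜)) w := by
  have coord (i : Fin 4) : HasFDerivAt (fun w : Fin 4 → 𝕜 ↦ w i)
      (proj i : (Fin 4 → 𝕜) →L[𝕜] 𝕜) w :=
    hasFDerivAt_apply i w
  rw [hasFDerivAt_pi']
  intro i
  fin_cases i
  · convert ((coord 3).sub ((coord 2).mul (coord 1))).sub
      (((coord 0).mul ((coord 1).pow 2)).const_mul (1 / 3)) using 1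
    · ext; simp [modelMap, mul_assoc]
    · ext; simp
  · exact ((coord 2).const_mul 2).add ((coord 0).mul (coord 1))
  · exact coord 1
  · exact (coord 0).const_mul (-2)

theorem fderiv_modelMap_apply (w v : Fin 4 → 𝕜) :
    fderiv 𝕜 modelMap w v =
      ![v 3 - (w 2 * v 1 + w 1 * v 2) - 1 / 3 * (w 0 * (2 * w 1 * v 1) + w 1 ^ 2 * v 0),
        2 * v 2 + (w 0 * v 1 + w 1 * v 0), v 1, -2 * v 0] := by
  rw [(hasFDerivAt_modelMap w).fderiv]
  ext i
  fin_cases i <;> rfl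

theorem modelForm₁_comp_fderiv_modelMap [NeZero (3 : 𝕜)] (w : Fin 4 → 𝕜) :
    modelForm₁ (modelMap w) ∘L fderiv 𝕜 modelMap w = superhorizontalForm₂ w := by
  have one_third : (1 / 3 : 𝕜) * 3 = 1 := one_div_mul_cancel three_ne_zero
  ext1 v
  calc modelForm₁ (modelMap w) (fderiv 𝕜 modelMap w v)
    _ = v 3 - (w 2 * v 1 + w 1 * v 2) - 1 / 3 * (w 0 * (2 * w 1 * v 1) + w 1 ^ 2 * v 0)
          + (2 * w 2 + w 0 * w 1) * v 1 := by rw [fderiv_modelMap_apply]; rfl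
    _ = v 3 + w 2 * v 1 - w 1 * v 2 + 1 / 3 * w 1 * w 0 * v 1 - 1 / 3 * w 1 ^ 2 * v 0 := by
      linear_combination (-(w 0 * w 1 * v 1)) * one_third

theorem modelForm₂_comp_fderiv_modelMap [NeZero (2 : 𝕜)] (w : Fin 4 → 𝕜) :
    modelForm₂ (modelMap w) ∘L fderiv 𝕜 modelMap w = (2 : 𝕜) • superhorizontalForm₁ w := by
  have one_half : (1 / 2 : 𝕜) * 2 = 1 := one_div_mul_cancel two_ne_zero
  ext1 v
  calc modelForm₂ (modelMap w) (fderiv 𝕜 modelMap w v)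
    _ = 2 * v 2 + (w 0 * v 1 + w 1 * v 0) + -2 * w 0 * v 1 := by
      rw [fderiv_modelMap_apply]; rfl
    _ = 2 * (v 2 - 1 / 2 * w 0 * v 1 + 1 / 2 * w 1 * v 0) := by
      linear_combination (w 0 * v 1 - w 1 * v 0) * one_half

theorem superhorizontalForm_eq_zero_iff [NeZero (2 : 𝕜)] [NeZero (3 : 𝕜)] (w v : Fin 4 → 𝕜) :
    (superhorizontalForm₁ w v = 0 ∧ superhorizontalForm₂ w v = 0) ↔
      (modelForm₁ (modelMap w) (fderiv 𝕜 modelMap w v) = 0 ∧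
        modelForm₂ (modelMap w) (fderiv 𝕜 modelMap w v) = 0) := by
  rw [← ContinuousLinearMap.comp_apply, ← ContinuousLinearMap.comp_apply,
    modelForm₁_comp_fderiv_modelMap, modelForm₂_comp_fderiv_modelMap,
    smul_apply, smul_eq_zero_iff_right two_ne_zero, and_comm]

end Pullback

theorem stmt6_general {𝕜 : Type*} [NontriviallyNormedField 𝕜] [NeZero (2 : 𝕜)] [NeZero (3 : 𝕜)]
    (ω₁ ω₂ : (Fin 4 → 𝕜) → ((Fin 4 → 𝕜) →L[𝕜] 𝕜))
    (hω₁ : ∀ w v, ω₁ w v = v 2 - (1 / 2) * w 0 * v 1 + (1 / 2) * w 1 * v 0)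
    (hω₂ : ∀ w v, ω₂ w v = v 3 + w 2 * v 1 - w 1 * v 2
      + (1 / 3) * w 1 * w 0 * v 1 - (1 / 3) * w 1 ^ 2 * v 0)
    (ψ : (Fin 4 → 𝕜) → (Fin 4 → 𝕜))
    (hψ : ∀ w, ψ w = ![w 3 - w 2 * w 1 - (1 / 3) * w 0 * w 1 ^ 2,
      2 * w 2 + w 0 * w 1, w 1, -2 * w 0]) :
    Function.Bijective ψ ∧
    ∀ w v : Fin 4 → 𝕜,
      (ω₁ w v = 0 ∧ ω₂ w v = 0) ↔
      ((fderiv 𝕜 ψ w v) 0 + (ψ w) 1 * (fderiv 𝕜 ψ w v) 2 = 0 ∧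
       (fderiv 𝕜 ψ w v) 1 + (ψ w) 3 * (fderiv 𝕜 ψ w v) 2 = 0) := by
  obtain rfl : ω₁ = superhorizontalForm₁ := funext fun w ↦ ContinuousLinearMap.ext (hω₁ w)
  obtain rfl : ω₂ = superhorizontalForm₂ := funext fun w ↦ ContinuousLinearMap.ext (hω₂ w)
  obtain rfl : ψ = modelMap := funext hψ
  exact ⟨modelMap_bijective, superhorizontalForm_eq_zero_iff⟩

/-- On `ℂ⁴` with coordinates `(x, t₂, t₁, y)` (indices `0,1,2,3`), the
super-horizontal Pfaffian system `{ω₁, ω₂}` of the twistor fibration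
`SO(5)/U(1)×SO(2) → SO(5)/SO(2)×SO(3)` is identified with the model system
`S⁷₄ = {dz₁ + z₂dz₃, dz₂ + z₄dz₃}` by
`ψ(x,t₂,t₁,y) = (y - t₁t₂ - (1/3)x t₂², 2t₁ + x t₂, t₂, -2x)`. -/
theorem stmt6 (ω₁ ω₂ : (Fin 4 → ℂ) → ((Fin 4 → ℂ) →L[ℂ] ℂ))
    (hω₁ : ∀ w v, ω₁ w v = v 2 - (1/2) * w 0 * v 1 + (1/2) * w 1 * v 0)
    (hω₂ : ∀ w v, ω₂ w v = v 3 + w 2 * v 1 - w 1 * v 2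
      + (1/3) * w 1 * w 0 * v 1 - (1/3) * w 1 ^ 2 * v 0)
    (ψ : (Fin 4 → ℂ) → (Fin 4 → ℂ))
    (hψ : ∀ w, ψ w = ![w 3 - w 2 * w 1 - (1/3) * w 0 * w 1 ^ 2,
      2 * w 2 + w 0 * w 1, w 1, -2 * w 0]) :
    Function.Bijective ψ ∧
    ∀ w v : Fin 4 → ℂ,
      (ω₁ w v = 0 ∧ ω₂ w v = 0) ↔
      ((fderiv ℂ ψ w v) 0 + (ψ w) 1 * (fderiv ℂ ψ w v) 2 = 0 ∧
       (fderiv ℂ ψ w v) 1 + (ψ w) 3 * (fderiv ℂ ψ w v) 2 = 0) :=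
  stmt6_general ω₁ ω₂ hω₁ hω₂ ψ hψ
end

section
/- On ℂ⁴ with coordinates (x, t₂, t₁, y), let ω₁(w)(v) = v_{t₁} − (1/2)x·v_{t₂} + (1/2)t₂·v_x and ω₂(w)(v) = v_y + t₁v_{t₂} − t₂v_{t₁} + (1/3)t₂x·v_{t₂} − (1/3)t₂²·v_x, and let D_w = ker(ω₁(w)) ∩ ker(ω₂(w)). Then: (a) for all differentiable vector fields X, Y : ℂ⁴ → ℂ⁴ with X(w), Y(w) ∈ D_w for all w, one has ω₂(w)([X,Y](w)) = 0 for all w; and (b) there exist differentiable vector fields X, Y valued in D such that ω₁(w)([X,Y](w)) ≠ 0 for every w ∈ ℂ⁴. (Hence the derived system of the SO(5) twistor Pfaffian system is {ω₂}, of rank 1.) -/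
/-!
Write `[X, Y]` for the Lie bracket. If a 1-form `ω` annihilates `X` and `Y` near a point, Cartan's
formula `dω(X, Y) = X(ω(Y)) - Y(ω(X)) - ω([X, Y])` gives `ω([X, Y]) = -dω(X, Y)` there. The twistor
system has the structure equations `dω₁ = -dx ∧ dt₂` and `dω₂ = 2 ω₁ ∧ dt₂`. Hence `dω₂` vanishes
on `ker ω₁`, while `dω₁(X, Y) = -1` for the sections `X, Y` of `ker ω₁ ∩ ker ω₂` that project to
`∂/∂x` and `∂/∂t₂` in the `(x, t₂)`-plane.
-/

open Filter Topology VectorField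

section OneForm

variable {𝕜 E F : Type*} [NontriviallyNormedField 𝕜] [NormedAddCommGroup E] [NormedSpace 𝕜 E]
  [NormedAddCommGroup F] [NormedSpace 𝕜 F] {ω : E → E →L[𝕜] F} {X Y : E → E} {x : E}

/-- The 1-form `ω` as a field of alternating maps in one variable, the encoding of differential
forms for which Mathlib defines the exterior derivative `extDeriv`. -/
def toAlternatingForm (ω : E → E →L[𝕜] F) (x : E) : E [⋀^Fin 1]→L[𝕜] F :=
  ContinuousAlternatingMap.ofSubsingleton 𝕜 E F 0 (ω x)

theorem differentiableAt_toAlternatingForm (hω : DifferentiableAt 𝕜 ω x) :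
    DifferentiableAt 𝕜 (toAlternatingForm ω) x :=
  let L : (E →L[𝕜] F) ≃ₗᵢ[𝕜] (E [⋀^Fin 1]→L[𝕜] F) :=
    ContinuousAlternatingMap.ofSubsingletonLIE 0
  L.differentiableAt.comp x hω

theorem extDeriv_toAlternatingForm_apply (hω : DifferentiableAt 𝕜 ω x) (u v : E) :
    extDeriv (toAlternatingForm ω) x ![u, v] =
      fderiv 𝕜 (ω · v) x u - fderiv 𝕜 (ω · u) x v := by
  simp [extDeriv_apply (differentiableAt_toAlternatingForm hω), Fin.sum_univ_two,
    toAlternatingForm, Fin.removeNth, sub_eq_add_neg]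

theorem extDeriv_toAlternatingForm_apply_vectorField (hω : DifferentiableAt 𝕜 ω x)
    (hX : DifferentiableAt 𝕜 X x) (hY : DifferentiableAt 𝕜 Y x) :
    extDeriv (toAlternatingForm ω) x ![X x, Y x] =
      fderiv 𝕜 (fun z ↦ ω z (Y z)) x (X x) - fderiv 𝕜 (fun z ↦ ω z (X z)) x (Y x) -
        ω x (lieBracket 𝕜 X Y x) := by
  have hXY : ∀ i, DifferentiableAt 𝕜 (![X, Y] i) x := Fin.forall_fin_two.2 ⟨hX, hY⟩
  have hvec (z : E) : (fun i ↦ ![X, Y] i z) = ![X z, Y z] := by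
    ext i
    fin_cases i <;> rfl
  have hcartan := extDeriv_apply_vectorField (differentiableAt_toAlternatingForm hω) hXY
  simp only [hvec] at hcartan
  simpa [Fin.sum_univ_two, toAlternatingForm, Fin.removeNth, sub_eq_add_neg] using hcartan

theorem apply_lieBracket_eq_neg_extDeriv (hω : DifferentiableAt 𝕜 ω x)
    (hX : DifferentiableAt 𝕜 X x) (hY : DifferentiableAt 𝕜 Y x)
    (hωX : ∀ᶠ z in 𝓝 x, ω z (X z) = 0) (hωY : ∀ᶠ z in 𝓝 x, ω z (Y z) = 0) :
    ω x (lieBracket 𝕜 X Y x) = -extDeriv (toAlternatingForm ω) x ![X x, Y x] := by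
  have hdX : fderiv 𝕜 (fun z ↦ ω z (X z)) x = 0 := by
    rw [EventuallyEq.fderiv_eq hωX, fderiv_fun_const, Pi.zero_apply]
  have hdY : fderiv 𝕜 (fun z ↦ ω z (Y z)) x = 0 := by
    rw [EventuallyEq.fderiv_eq hωY, fderiv_fun_const, Pi.zero_apply]
  simp [extDeriv_toAlternatingForm_apply_vectorField hω hX hY, hdX, hdY]

end OneForm

section Twistor

open ContinuousLinearMap (proj)

variable {𝕜 : Type*} [NontriviallyNormedField 𝕜]

/-- The first 1-form `dt₁ - (x/2) dt₂ + (t₂/2) dx` of the `SO(5)` twistor Pfaffian system. The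
coordinates `(x, t₂, t₁, y)` are indexed by `0, 1, 2, 3` in this order. -/
def twistorForm₁ (w : Fin 4 → 𝕜) : (Fin 4 → 𝕜) →L[𝕜] 𝕜 :=
  proj 2 - (1 / 2 * w 0) • proj 1 + (1 / 2 * w 1) • proj 0

/-- The second 1-form `dy + t₁ dt₂ - t₂ dt₁ + (t₂ x/3) dt₂ - (t₂²/3) dx` of the `SO(5)` twistor
Pfaffian system, which spans the derived system. -/
def twistorForm₂ (w : Fin 4 → 𝕜) : (Fin 4 → 𝕜) →L[𝕜] 𝕜 :=
  proj 3 + w 2 • proj 1 - w 1 • proj 2 + (1 / 3 * w 1 * w 0) • proj 1 -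
    (1 / 3 * w 1 ^ 2) • proj 0

theorem twistorForm₁_apply (w v : Fin 4 → 𝕜) :
    twistorForm₁ w v = v 2 - 1 / 2 * w 0 * v 1 + 1 / 2 * w 1 * v 0 :=
  rfl

theorem twistorForm₂_apply (w v : Fin 4 → 𝕜) :
    twistorForm₂ w v =
      v 3 + w 2 * v 1 - w 1 * v 2 + 1 / 3 * w 1 * w 0 * v 1 - 1 / 3 * w 1 ^ 2 * v 0 :=
  rfl

theorem differentiable_twistorForm₁ :
    Differentiable 𝕜 (twistorForm₁ : (Fin 4 → 𝕜) → (Fin 4 → 𝕜) →L[𝕜] 𝕜) := by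
  unfold twistorForm₁
  fun_prop

theorem differentiable_twistorForm₂ :
    Differentiable 𝕜 (twistorForm₂ : (Fin 4 → 𝕜) → (Fin 4 → 𝕜) →L[𝕜] 𝕜) := by
  unfold twistorForm₂
  fun_prop

theorem fderiv_twistorForm₁_apply (w u v : Fin 4 → 𝕜) :
    fderiv 𝕜 (twistorForm₁ · v) w u = -(1 / 2 * u 0 * v 1) + 1 / 2 * u 1 * v 0 := by
  simp (disch := fun_prop) only [twistorForm₁_apply, fderiv_fun_add, fderiv_fun_sub,
    fderiv_fun_mul, fderiv_apply, fderiv_fun_const, fderiv_fun_id, Pi.zero_apply,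
    ContinuousLinearMap.comp_id, ContinuousLinearMap.comp_zero, ContinuousLinearMap.proj_apply,
    add_apply, sub_apply, smul_apply, zero_apply, smul_eq_mul]
  ring

theorem fderiv_twistorForm₂_apply (w u v : Fin 4 → 𝕜) :
    fderiv 𝕜 (twistorForm₂ · v) w u =
      u 2 * v 1 - u 1 * v 2 + 1 / 3 * (u 1 * w 0 + w 1 * u 0) * v 1 -
        1 / 3 * (2 * w 1 * u 1) * v 0 := by
  simp (disch := fun_prop) only [twistorForm₂_apply, sq, fderiv_fun_add, fderiv_fun_sub,
    fderiv_fun_mul, fderiv_apply, fderiv_fun_const, fderiv_fun_id, Pi.zero_apply,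
    ContinuousLinearMap.comp_id, ContinuousLinearMap.comp_zero, ContinuousLinearMap.proj_apply,
    add_apply, sub_apply, smul_apply, zero_apply, smul_eq_mul]
  ring

theorem extDeriv_twistorForm₁ [NeZero (2 : 𝕜)] (w u v : Fin 4 → 𝕜) :
    extDeriv (toAlternatingForm twistorForm₁) w ![u, v] = -(u 0 * v 1 - v 0 * u 1) := by
  rw [extDeriv_toAlternatingForm_apply (differentiable_twistorForm₁ w),
    fderiv_twistorForm₁_apply, fderiv_twistorForm₁_apply]
  field_simp
  ring

theorem extDeriv_twistorForm₂ [NeZero (2 : 𝕜)] [NeZero (3 : 𝕜)] (w u v : Fin 4 → 𝕜) :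
    extDeriv (toAlternatingForm twistorForm₂) w ![u, v] =
      2 * (twistorForm₁ w u * v 1 - twistorForm₁ w v * u 1) := by
  rw [extDeriv_toAlternatingForm_apply (differentiable_twistorForm₂ w),
    fderiv_twistorForm₂_apply, fderiv_twistorForm₂_apply, twistorForm₁_apply, twistorForm₁_apply]
  field_simp
  ring

theorem twistorForm₂_lieBracket_eq_zero [NeZero (2 : 𝕜)] [NeZero (3 : 𝕜)]
    {X Y : (Fin 4 → 𝕜) → (Fin 4 → 𝕜)} {w : Fin 4 → 𝕜}
    (hX : DifferentiableAt 𝕜 X w) (hY : DifferentiableAt 𝕜 Y w)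
    (hX₁ : twistorForm₁ w (X w) = 0) (hY₁ : twistorForm₁ w (Y w) = 0)
    (hX₂ : ∀ᶠ z in 𝓝 w, twistorForm₂ z (X z) = 0)
    (hY₂ : ∀ᶠ z in 𝓝 w, twistorForm₂ z (Y z) = 0) :
    twistorForm₂ w (lieBracket 𝕜 X Y w) = 0 := by
  rw [apply_lieBracket_eq_neg_extDeriv (differentiable_twistorForm₂ w) hX hY hX₂ hY₂,
    extDeriv_twistorForm₂, hX₁, hY₁]
  ring

/-- The vector field `∂/∂x - (t₂/2) ∂/∂t₁ + (1/3 - 1/2) t₂² ∂/∂y`: the lift of `∂/∂x` to the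
distribution of the twistor system. The coefficient `1/3 - 1/2` is kept unevaluated:
with `a / 0 = 0` it differs from `-1/6` in characteristics `2` and `3`. -/
def twistorLiftX (w : Fin 4 → 𝕜) : Fin 4 → 𝕜 :=
  ![1, 0, -(1 / 2 * w 1), (1 / 3 - 1 / 2) * w 1 ^ 2]

/-- The vector field `∂/∂t₂ + (x/2) ∂/∂t₁ + ((1/2 - 1/3) t₂ x - t₁) ∂/∂y`: the lift of `∂/∂t₂` to
the distribution of the twistor system. -/
def twistorLiftT₂ (w : Fin 4 → 𝕜) : Fin 4 → 𝕜 :=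
  ![0, 1, 1 / 2 * w 0, (1 / 2 - 1 / 3) * w 1 * w 0 - w 2]

theorem differentiable_twistorLiftX :
    Differentiable 𝕜 (twistorLiftX : (Fin 4 → 𝕜) → Fin 4 → 𝕜) := by
  refine differentiable_pi.2 fun i ↦ ?_
  fin_cases i <;> dsimp [twistorLiftX] <;> fun_prop

theorem differentiable_twistorLiftT₂ :
    Differentiable 𝕜 (twistorLiftT₂ : (Fin 4 → 𝕜) → Fin 4 → 𝕜) := by
  refine differentiable_pi.2 fun i ↦ ?_
  fin_cases i <;> dsimp [twistorLiftT₂] <;> fun_prop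

theorem twistorForm₁_twistorLiftX (w : Fin 4 → 𝕜) : twistorForm₁ w (twistorLiftX w) = 0 := by
  simp only [twistorForm₁_apply, twistorLiftX, Matrix.cons_val]
  ring

theorem twistorForm₂_twistorLiftX (w : Fin 4 → 𝕜) : twistorForm₂ w (twistorLiftX w) = 0 := by
  simp only [twistorForm₂_apply, twistorLiftX, Matrix.cons_val]
  ring

theorem twistorForm₁_twistorLiftT₂ (w : Fin 4 → 𝕜) : twistorForm₁ w (twistorLiftT₂ w) = 0 := by
  simp only [twistorForm₁_apply, twistorLiftT₂, Matrix.cons_val]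
  ring

theorem twistorForm₂_twistorLiftT₂ (w : Fin 4 → 𝕜) : twistorForm₂ w (twistorLiftT₂ w) = 0 := by
  simp only [twistorForm₂_apply, twistorLiftT₂, Matrix.cons_val]
  ring

theorem twistorForm₁_lieBracket_twistorLift [NeZero (2 : 𝕜)] (w : Fin 4 → 𝕜) :
    twistorForm₁ w (lieBracket 𝕜 twistorLiftX twistorLiftT₂ w) = 1 := by
  rw [apply_lieBracket_eq_neg_extDeriv (differentiable_twistorForm₁ w)
    (differentiable_twistorLiftX w) (differentiable_twistorLiftT₂ w)
    (.of_forall twistorForm₁_twistorLiftX) (.of_forall twistorForm₁_twistorLiftT₂),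
    extDeriv_twistorForm₁]
  simp [twistorLiftX, twistorLiftT₂]

theorem stmt7_general [NeZero (2 : 𝕜)] [NeZero (3 : 𝕜)]
    (ω₁ ω₂ : (Fin 4 → 𝕜) → ((Fin 4 → 𝕜) →L[𝕜] 𝕜))
    (hω₁ : ∀ w v, ω₁ w v = v 2 - 1 / 2 * w 0 * v 1 + 1 / 2 * w 1 * v 0)
    (hω₂ : ∀ w v, ω₂ w v = v 3 + w 2 * v 1 - w 1 * v 2 +
      1 / 3 * w 1 * w 0 * v 1 - 1 / 3 * w 1 ^ 2 * v 0) :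
    (∀ (X Y : (Fin 4 → 𝕜) → (Fin 4 → 𝕜)) (w : Fin 4 → 𝕜),
      DifferentiableAt 𝕜 X w → DifferentiableAt 𝕜 Y w →
      ω₁ w (X w) = 0 → ω₁ w (Y w) = 0 →
      (∀ᶠ z in 𝓝 w, ω₂ z (X z) = 0) → (∀ᶠ z in 𝓝 w, ω₂ z (Y z) = 0) →
      ω₂ w (lieBracket 𝕜 X Y w) = 0) ∧
    (∃ X Y : (Fin 4 → 𝕜) → (Fin 4 → 𝕜), Differentiable 𝕜 X ∧ Differentiable 𝕜 Y ∧
      (∀ w, ω₁ w (X w) = 0 ∧ ω₂ w (X w) = 0) ∧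
      (∀ w, ω₁ w (Y w) = 0 ∧ ω₂ w (Y w) = 0) ∧
      ∀ w, ω₁ w (lieBracket 𝕜 X Y w) ≠ 0) := by
  obtain rfl : ω₁ = twistorForm₁ := by
    ext1 w
    exact ContinuousLinearMap.ext fun v ↦ hω₁ w v
  obtain rfl : ω₂ = twistorForm₂ := by
    ext1 w
    exact ContinuousLinearMap.ext fun v ↦ hω₂ w v
  refine ⟨fun X Y w ↦ twistorForm₂_lieBracket_eq_zero, twistorLiftX, twistorLiftT₂,
    differentiable_twistorLiftX, differentiable_twistorLiftT₂,
    fun w ↦ ⟨twistorForm₁_twistorLiftX w, twistorForm₂_twistorLiftX w⟩,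
    fun w ↦ ⟨twistorForm₁_twistorLiftT₂ w, twistorForm₂_twistorLiftT₂ w⟩, fun w ↦ ?_⟩
  rw [twistorForm₁_lieBracket_twistorLift]
  exact one_ne_zero

end Twistor

/-- For the SO(5) twistor Pfaffian system `{ω₁, ω₂}` on `ℂ⁴` with
distribution `D = ker ω₁ ∩ ker ω₂`: (a) brackets of differentiable vector fields valued
in `D` are annihilated by `ω₂`; (b) some pair of differentiable vector fields valued in
`D` has bracket on which `ω₁` never vanishes. Hence the derived system is `{ω₂}`. -/
theorem stmt7 (ω₁ ω₂ : (Fin 4 → ℂ) → ((Fin 4 → ℂ) →L[ℂ] ℂ))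
    (hω₁ : ∀ w v, ω₁ w v = v 2 - (1/2) * w 0 * v 1 + (1/2) * w 1 * v 0)
    (hω₂ : ∀ w v, ω₂ w v = v 3 + w 2 * v 1 - w 1 * v 2
      + (1/3) * w 1 * w 0 * v 1 - (1/3) * w 1 ^ 2 * v 0) :
    (∀ X Y : (Fin 4 → ℂ) → (Fin 4 → ℂ), Differentiable ℂ X → Differentiable ℂ Y →
      (∀ w, ω₁ w (X w) = 0 ∧ ω₂ w (X w) = 0) →
      (∀ w, ω₁ w (Y w) = 0 ∧ ω₂ w (Y w) = 0) →
      ∀ w, ω₂ w (fderiv ℂ Y w (X w) - fderiv ℂ X w (Y w)) = 0) ∧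
    (∃ X Y : (Fin 4 → ℂ) → (Fin 4 → ℂ), Differentiable ℂ X ∧ Differentiable ℂ Y ∧
      (∀ w, ω₁ w (X w) = 0 ∧ ω₂ w (X w) = 0) ∧
      (∀ w, ω₁ w (Y w) = 0 ∧ ω₂ w (Y w) = 0) ∧
      ∀ w, ω₁ w (fderiv ℂ Y w (X w) - fderiv ℂ X w (Y w)) ≠ 0) := by
  obtain ⟨hbracket, hframe⟩ := stmt7_general ω₁ ω₂ hω₁ hω₂
  exact ⟨fun X Y hX hY hDX hDY w ↦ hbracket X Y w (hX w) (hY w) (hDX w).1 (hDY w).1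
    (.of_forall fun z ↦ (hDX z).2) (.of_forall fun z ↦ (hDY z).2), hframe⟩
end

section
/- Let ω be the 1-form on ℂ⁵ given by ω(w)(v) = v₅ − (1/2)(w₁v₄ − w₄v₁) − (1/2)(w₃v₂ − w₂v₃), and let η be the contact 1-form on ℂ⁵ given by η(z)(u) = u₁ + z₂u₃ + z₄u₅. Define φ : ℂ⁵ → ℂ⁵ by φ(w₁,w₂,w₃,w₄,w₅) = (w₅ − (1/2)w₁w₄ − (1/2)w₂w₃, w₄, w₁, w₂, w₃). Then φ is bijective, and for every w ∈ ℂ⁵ and v ∈ ℂ⁵ one has ω(w)(v) = 0 if and only if η(φ(w))((fderiv φ w)(v)) = 0. (This identifies the superhorizontal Pfaffian system of the SU(4) twistor fibration with g₁ = g_α ⊕ g_γ ⊕ g_{α+β} ⊕ g_{β+γ}, g₂ = g_{α+β+γ} with the model system S³₅ = {dz₁ + z₂dz₃ + z₄dz₅}.) -/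
/-!
With `pᵢ`, `qᵢ` the two conjugate pairs of coordinates `(w₄, w₁)`, `(w₂, w₃)` and `t = w₅`, the
product rule gives
`d(t - ½ ∑ pᵢ qᵢ) + ∑ pᵢ dqᵢ = dt - ½ ∑ (qᵢ dpᵢ - pᵢ dqᵢ)`,
so `φ` pulls `η` back to `ω` itself, and not merely to a multiple of it. Since `φ` shears `t` by a
function of the other coordinates and permutes, it is bijective.
-/

theorem hasFDerivAt_sub_half_sum_mul {𝕜 E ι : Type*} [NontriviallyNormedField 𝕜] [NeZero (2 : 𝕜)]
    [NormedAddCommGroup E] [NormedSpace 𝕜 E] (s : Finset ι)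
    {t : E → 𝕜} {p q : ι → E → 𝕜} {t' : E →L[𝕜] 𝕜} {p' q' : ι → E →L[𝕜] 𝕜} {x : E}
    (ht : HasFDerivAt t t' x) (hp : ∀ i ∈ s, HasFDerivAt (p i) (p' i) x)
    (hq : ∀ i ∈ s, HasFDerivAt (q i) (q' i) x) :
    HasFDerivAt (fun y ↦ t y - (1 / 2) * ∑ i ∈ s, p i y * q i y)
      (t' - (1 / 2 : 𝕜) • ∑ i ∈ s, (q i x • p' i - p i x • q' i) - ∑ i ∈ s, p i x • q' i) x := by
  have product_rule : HasFDerivAt (fun y ↦ ∑ i ∈ s, p i y * q i y)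
      (∑ i ∈ s, (p i x • q' i + q i x • p' i)) x :=
    HasFDerivAt.fun_sum fun i hi ↦ (hp i hi).mul (hq i hi)
  refine (ht.sub (product_rule.const_mul (1 / 2))).congr_fderiv ?_
  rw [Finset.sum_add_distrib, Finset.sum_sub_distrib]
  match_scalars <;> field_simp
  norm_num

/-- The change of coordinates `φ` from the symmetric contact form
`dw₅ - ½(w₁dw₄ - w₄dw₁) - ½(w₃dw₂ - w₂dw₃)` to the Darboux normal form `dz₁ + z₂dz₃ + z₄dz₅`.
Indices start at `0`, so `w₁, …, w₅` are `w 0, …, w 4`. -/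
def darbouxEquiv (K : Type*) [Field K] : (Fin 5 → K) ≃ (Fin 5 → K) where
  toFun w := ![w 4 - (1 / 2) * w 0 * w 3 - (1 / 2) * w 1 * w 2, w 3, w 0, w 1, w 2]
  invFun z := ![z 2, z 3, z 4, z 1, z 0 + (1 / 2) * z 2 * z 1 + (1 / 2) * z 3 * z 4]
  left_inv w := by
    ext i
    fin_cases i
    iterate 4 rfl
    simp only [Matrix.cons_val, Fin.reduceFinMk]
    ring
  right_inv z := by
    ext i
    fin_cases i
    · simp only [Matrix.cons_val, Fin.zero_eta]
      ring
    iterate 4 rfl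

section HasFDerivAt

variable {𝕜 : Type*} [NontriviallyNormedField 𝕜] [NeZero (2 : 𝕜)]

local notation "dw" => ContinuousLinearMap.proj (R := 𝕜) (φ := fun _ : Fin 5 ↦ 𝕜)

theorem hasFDerivAt_darbouxEquiv (w : Fin 5 → 𝕜) :
    HasFDerivAt (darbouxEquiv 𝕜)
      (ContinuousLinearMap.pi
        ![dw 4 - (1 / 2 : 𝕜) • (w 0 • dw 3 - w 3 • dw 0 + (w 2 • dw 1 - w 1 • dw 2))
            - (w 3 • dw 0 + w 1 • dw 2),
          dw 3, dw 0, dw 1, dw 2]) w := by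
  have hasFDerivAt_zeroth := hasFDerivAt_sub_half_sum_mul (𝕜 := 𝕜) Finset.univ (x := w)
    (p := fun i y ↦ y (![3, 1] i)) (q := fun i y ↦ y (![0, 2] i))
    (hasFDerivAt_apply (4 : Fin 5) w)
    (fun i _ ↦ hasFDerivAt_apply (![3, 1] i) w) (fun i _ ↦ hasFDerivAt_apply (![0, 2] i) w)
  simp only [Fin.sum_univ_two, Matrix.cons_val] at hasFDerivAt_zeroth
  refine hasFDerivAt_pi.2 fun i ↦ ?_
  fin_cases i
  · refine hasFDerivAt_zeroth.congr_of_eventuallyEq (.of_forall fun y ↦ ?_)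
    simp only [darbouxEquiv, Equiv.coe_fn_mk, Fin.zero_eta, Matrix.cons_val]
    ring
  · exact hasFDerivAt_apply 3 w
  · exact hasFDerivAt_apply 0 w
  · exact hasFDerivAt_apply 1 w
  · exact hasFDerivAt_apply 2 w

end HasFDerivAt

theorem stmt16_general {𝕜 : Type*} [NontriviallyNormedField 𝕜] [NeZero (2 : 𝕜)]
    (ω η : (Fin 5 → 𝕜) → ((Fin 5 → 𝕜) →L[𝕜] 𝕜))
    (hω : ∀ w v, ω w v = v 4 - (1 / 2) * (w 0 * v 3 - w 3 * v 0)
      - (1 / 2) * (w 2 * v 1 - w 1 * v 2))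
    (hη : ∀ z u, η z u = u 0 + z 1 * u 2 + z 3 * u 4)
    (φ : (Fin 5 → 𝕜) → (Fin 5 → 𝕜))
    (hφ : ∀ w, φ w = ![w 4 - (1 / 2) * w 0 * w 3 - (1 / 2) * w 1 * w 2, w 3, w 0, w 1, w 2]) :
    Function.Bijective φ ∧ ∀ w, (η (φ w)).comp (fderiv 𝕜 φ w) = ω w := by
  obtain rfl : φ = darbouxEquiv 𝕜 := funext hφ
  refine ⟨(darbouxEquiv 𝕜).bijective, fun w ↦ ContinuousLinearMap.ext fun v ↦ ?_⟩
  rw [(hasFDerivAt_darbouxEquiv w).fderiv, ContinuousLinearMap.comp_apply, hη, hω, hφ]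
  simp only [ContinuousLinearMap.coe_pi', Matrix.cons_val, sub_apply, add_apply, smul_apply,
    ContinuousLinearMap.proj_apply, smul_eq_mul]
  ring

/-- On `ℂ⁵`, the 1-form
`ω(w)(v) = v₅ - (1/2)(w₁v₄ - w₄v₁) - (1/2)(w₃v₂ - w₂v₃)` (the superhorizontal system of
the SU(4) twistor fibration) is identified with the contact model system
`S³₅ = {dz₁ + z₂dz₃ + z₄dz₅}` by
`φ(w₁,…,w₅) = (w₅ - (1/2)w₁w₄ - (1/2)w₂w₃, w₄, w₁, w₂, w₃)`. -/
theorem stmt16 (ω η : (Fin 5 → ℂ) → ((Fin 5 → ℂ) →L[ℂ] ℂ))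
    (hω : ∀ w v, ω w v = v 4 - (1/2) * (w 0 * v 3 - w 3 * v 0)
      - (1/2) * (w 2 * v 1 - w 1 * v 2))
    (hη : ∀ z u, η z u = u 0 + z 1 * u 2 + z 3 * u 4)
    (φ : (Fin 5 → ℂ) → (Fin 5 → ℂ))
    (hφ : ∀ w, φ w = ![w 4 - (1/2) * w 0 * w 3 - (1/2) * w 1 * w 2, w 3, w 0, w 1, w 2]) :
    Function.Bijective φ ∧
    ∀ w v : Fin 5 → ℂ, ω w v = 0 ↔ η (φ w) (fderiv ℂ φ w v) = 0 := by
  obtain ⟨bijective, pullback_eq⟩ := stmt16_general ω η hω hη φ hφ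
  exact ⟨bijective, fun w v ↦ by rw [← pullback_eq w, ContinuousLinearMap.comp_apply]⟩
end
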